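/- arXiv:1108.5415 — 2 statements merged into one kernel-verified Lean document; each statement's English description precedes it below -/
import Mathlib

section
/- Fix real numbers a, b with 0 < b < a − 2. There exists N such that for all n ≥ N the following holds. Let x, y ∈ M_n satisfy max_{i,k} |x[i,k] − y[i,k]| ≤ n^{−a} and min_{i,k} min(x[i,k], y[i,k], 2 − x[i,k], 2 − y[i,k]) ≥ n^{−b}. Fix a subset S ⊂ {1,…,n} and indices i ∈ S, j ∉ S. Then there exists a coupling (λ_x, λ_y) of two uniform random variables on [0,1] (a probability measure on [0,1]² with both coordinate marginals equal to Lebesgue measure on [0,1]) such that, letting x' be x updated at the pair (i,j) with λ_x via the Gibbs-sampler update rule and y' be y updated at (i,j) with λ_y, we have P[∑_{s∈S} x'[s,1] = ∑_{s∈S} y'[s,1]] ≥ 1 − 4·n^{b+2−a}. -/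
/-!
Updating the rows `(i, j)` with `λ` uniform makes the `S`-weight of the first column uniform on an
interval `[A, B]` whose length is at least `2 n ^ (-b)`. Replacing `x` by `y` moves each of the two
endpoints by at most `n * n ^ (-a)`. The multiple of Lebesgue measure on `[A, B] ∩ [A', B']` that
lies below both uniform laws is a partial coupling living on the event of equality, and any partial
coupling extends to a coupling. The uncoupled mass is at most the displacement of the endpoints
divided by the length.
-/

open MeasureTheory

noncomputable section

/-- Uniform probability measure on a finset. -/
def unifOn {α : Type*} [MeasurableSpace α] (s : Finset α) : Measure α :=
  (s.card : ENNReal)⁻¹ • ∑ a ∈ s, Measure.dirac a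

/-- Total variation distance between two measures. -/
def tvDist {α : Type*} [MeasurableSpace α] (μ ν : Measure α) : ℝ :=
  ⨆ A : {A : Set α // MeasurableSet A}, ((μ A).toReal - (ν A).toReal)

/-- The set `M_n` of nonnegative `n × 2` matrices with row sums `2` and column sums `n`. -/
def MSet (n : ℕ) : Set (Fin n × Fin 2 → ℝ) :=
  {x | (∀ p, 0 ≤ x p) ∧ (∀ i : Fin n, x (i, 0) + x (i, 1) = 2) ∧
    (∀ j : Fin 2, ∑ i : Fin n, x (i, j) = n)}

/-- The uniform (normalized `(n-1)`-dimensional Hausdorff) measure on `M_n`. -/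
def UM (n : ℕ) : Measure (Fin n × Fin 2 → ℝ) :=
  (μH[(n : ℝ) - 1] (MSet n))⁻¹ • (μH[(n : ℝ) - 1]).restrict (MSet n)

/-- One step of the Gibbs sampler on `M_n`, updating the pair of rows `u.1 = (i, j)`
using the uniform variable `u.2 = λ`. -/
def stepM (n : ℕ) (x : Fin n × Fin 2 → ℝ) (u : (Fin n × Fin n) × ℝ) :
    Fin n × Fin 2 → ℝ := fun p =>
  let i := u.1.1
  let j := u.1.2
  let l := u.2
  let d := 2 - x (i, 0) - x (j, 0)
  if p = (i, 0) then (if 0 ≤ d then l * (2 - d) else 2 * l - (1 - l) * d)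
  else if p = (j, 0) then (if 0 ≤ d then (1 - l) * (2 - d) else 2 * (1 - l) - l * d)
  else if p = (i, 1) then (if 0 ≤ d then 2 * (1 - l) + l * d else (1 - l) * (2 + d))
  else if p = (j, 1) then (if 0 ≤ d then 2 * l + (1 - l) * d else l * (2 + d))
  else x p

/-- The set of ordered pairs `(i, j)` with `i < j`. -/
def pairsF (n : ℕ) : Finset (Fin n × Fin n) := Finset.univ.filter fun p => p.1 < p.2

/-- Law of the random update datum: `(i, j)` uniform among pairs `i < j`, and
`λ` uniform on `[0,1]`. -/
def driveM (n : ℕ) : Measure ((Fin n × Fin n) × ℝ) :=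
  (unifOn (pairsF n)).prod ((volume : Measure ℝ).restrict (Set.Icc 0 1))

/-- Law of the Gibbs sampler on `M_n` after `T` steps started at `x`. -/
def lawM (n : ℕ) (x : Fin n × Fin 2 → ℝ) (T : ℕ) : Measure (Fin n × Fin 2 → ℝ) :=
  Measure.map (fun ω : Fin T → (Fin n × Fin n) × ℝ => (List.ofFn ω).foldl (stepM n) x)
    (Measure.pi fun _ => driveM n)

/-- Law of the `(T+1)`-step path of the Gibbs sampler on `M_n` with initial distribution `μ`. -/
def pathM (n T : ℕ) (μ : Measure (Fin n × Fin 2 → ℝ)) :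
    Measure (Fin (T + 1) → Fin n × Fin 2 → ℝ) :=
  Measure.map (fun p : (Fin n × Fin 2 → ℝ) × (Fin T → (Fin n × Fin n) × ℝ) =>
      fun s : Fin (T + 1) => ((List.ofFn p.2).take s).foldl (stepM n) p.1)
    (μ.prod (Measure.pi fun _ => driveM n))

open Set
open scoped ProbabilityTheory

section Coupling

variable {α β E : Type*} [MeasurableSpace α] [MeasurableSpace β] [MeasurableSpace E]

/-- `γ` is a coupling of `μ` and `ν`: a measure on the product with these marginals. Masses are not
normalized, so that a coupling can be assembled as a sum. -/
structure IsCoupling (γ : Measure (α × β)) (μ : Measure α) (ν : Measure β) : Prop where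
  fst_eq : γ.fst = μ
  snd_eq : γ.snd = ν

namespace IsCoupling

variable {γ γ' : Measure (α × β)} {μ μ' : Measure α} {ν ν' : Measure β}

lemma measure_univ_eq (h : IsCoupling γ μ ν) : γ univ = μ univ := by
  rw [← Measure.fst_univ, h.fst_eq]

lemma isProbabilityMeasure [IsProbabilityMeasure μ] (h : IsCoupling γ μ ν) :
    IsProbabilityMeasure γ :=
  ⟨h.measure_univ_eq.trans measure_univ⟩

lemma add (h : IsCoupling γ μ ν) (h' : IsCoupling γ' μ' ν') :
    IsCoupling (γ + γ') (μ + μ') (ν + ν') where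
  fst_eq := by rw [Measure.fst_add, h.fst_eq, h'.fst_eq]
  snd_eq := by rw [Measure.snd_add, h.snd_eq, h'.snd_eq]

end IsCoupling

lemma exists_isCoupling_of_measure_univ_eq {μ : Measure α} {ν : Measure β} [IsFiniteMeasure μ]
    [IsFiniteMeasure ν] (h : μ univ = ν univ) : ∃ γ, IsCoupling γ μ ν := by
  rcases eq_or_ne (μ univ) 0 with h0 | h0
  · have hμ : μ = 0 := Measure.measure_univ_eq_zero.1 h0
    have hν : ν = 0 := Measure.measure_univ_eq_zero.1 (h ▸ h0)
    exact ⟨0, by simp [hμ], by simp [hν]⟩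
  · have hinv : (μ univ)⁻¹ * μ univ = 1 := ENNReal.inv_mul_cancel h0 (measure_ne_top μ univ)
    refine ⟨(μ univ)⁻¹ • μ.prod ν, ?_, ?_⟩
    · rw [Measure.fst, Measure.map_smul, Measure.map_fst_prod, ← h, smul_smul, hinv, one_smul]
    · rw [Measure.snd, Measure.map_smul, Measure.map_snd_prod, smul_smul, hinv, one_smul]

lemma exists_isCoupling_ge {μ : Measure α} {ν : Measure β} [IsFiniteMeasure μ] [IsFiniteMeasure ν]
    (h : μ univ = ν univ) {g : Measure (α × β)} (hfst : g.fst ≤ μ) (hsnd : g.snd ≤ ν) :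
    ∃ γ, IsCoupling γ μ ν ∧ g ≤ γ := by
  have : IsFiniteMeasure g.fst := isFiniteMeasure_of_le μ hfst
  have : IsFiniteMeasure g.snd := isFiniteMeasure_of_le ν hsnd
  have hμ : μ - g.fst + g.fst = μ := Measure.sub_add_cancel_of_le hfst
  have hν : ν - g.snd + g.snd = ν := Measure.sub_add_cancel_of_le hsnd
  have hrest : (μ - g.fst) univ = (ν - g.snd) univ := by
    rw [Measure.sub_apply .univ hfst, Measure.sub_apply .univ hsnd, h, Measure.fst_univ,
      Measure.snd_univ]
  obtain ⟨γ, hγ⟩ := exists_isCoupling_of_measure_univ_eq hrest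
  refine ⟨γ + g, ?_, Measure.le_add_left le_rfl⟩
  simpa only [hμ, hν] using hγ.add (⟨rfl, rfl⟩ : IsCoupling g g.fst g.snd)

lemma exists_isCoupling_le_measure_eq {μ : Measure α} {ν : Measure β} [IsFiniteMeasure μ]
    [IsFiniteMeasure ν] (h : μ univ = ν univ) (e : α ≃ᵐ E) (f : β ≃ᵐ E) {ρ : Measure E}
    (hμ : ρ ≤ μ.map e) (hν : ρ ≤ ν.map f) :
    ∃ γ, IsCoupling γ μ ν ∧ ρ univ ≤ γ {p | e p.1 = f p.2} := by
  have hmeas : Measurable fun z ↦ (e.symm z, f.symm z) := e.symm.measurable.prodMk f.symm.measurable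
  have hfst : (ρ.map fun z ↦ (e.symm z, f.symm z)).fst ≤ μ := by
    rw [Measure.fst_map_prodMk f.symm.measurable, ← e.map_symm_map (μ := μ)]
    exact Measure.map_mono hμ e.symm.measurable
  have hsnd : (ρ.map fun z ↦ (e.symm z, f.symm z)).snd ≤ ν := by
    rw [Measure.snd_map_prodMk e.symm.measurable, ← f.map_symm_map (μ := ν)]
    exact Measure.map_mono hν f.symm.measurable
  obtain ⟨γ, hγ, hle⟩ := exists_isCoupling_ge h hfst hsnd
  refine ⟨γ, hγ, ?_⟩
  calc ρ univ = ρ ((fun z ↦ (e.symm z, f.symm z)) ⁻¹' {p | e p.1 = f p.2}) := by simp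
    _ ≤ ρ.map (fun z ↦ (e.symm z, f.symm z)) {p | e p.1 = f p.2} :=
      Measure.le_map_apply hmeas.aemeasurable _
    _ ≤ γ {p | e p.1 = f p.2} := hle _

end Coupling

section UniformOnIntervals

lemma smul_restrict_le_cond {Ω : Type*} [MeasurableSpace Ω] (μ : Measure Ω) {s t : Set Ω}
    {c : ENNReal} (hst : s ⊆ t) (hc : c ≤ (μ t)⁻¹) : c • μ.restrict s ≤ μ[|t] := by
  rw [ProbabilityTheory.cond]
  gcongr

instance isProbabilityMeasure_volume_restrict_Icc_zero_one :
    IsProbabilityMeasure ((volume : Measure ℝ).restrict (Icc 0 1)) :=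
  ⟨by simp⟩

lemma map_affineHomeomorph_volume_restrict_Icc {A B : ℝ} (h : A < B) :
    ((volume : Measure ℝ).restrict (Icc 0 1)).map
        (affineHomeomorph (B - A) A (sub_pos.2 h).ne').toMeasurableEquiv = volume[|Icc A B] := by
  set e := (affineHomeomorph (B - A) A (sub_pos.2 h).ne').toMeasurableEquiv
  have hpre : Icc (0 : ℝ) 1 = e ⁻¹' Icc A B := by
    rw [← e.coe_toEquiv, Equiv.eq_preimage_iff_image_eq]
    simpa [e] using affineHomeomorph_image_Icc (B - A) A 0 1 (sub_pos.2 h)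
  have hcomp : ⇑e = (· + A) ∘ ((B - A) * ·) := rfl
  have hvol : (volume : Measure ℝ).map e = ENNReal.ofReal (B - A)⁻¹ • volume := by
    rw [hcomp, ← Measure.map_map (measurable_add_const A) (measurable_const_mul _),
      Real.map_volume_mul_left (sub_pos.2 h).ne', Measure.map_smul, map_add_right_eq_self,
      abs_of_pos (inv_pos.2 (sub_pos.2 h))]
  rw [hpre, ← Measure.restrict_map e.measurable measurableSet_Icc, hvol, Measure.restrict_smul,
    ProbabilityTheory.cond, Real.volume_Icc, ENNReal.ofReal_inv_of_pos (sub_pos.2 h)]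

lemma one_sub_div_le_overlap {A B A' B' : ℝ} (h : A < B) :
    1 - (|A - A'| + |B - B'|) / max (B - A) (B' - A') ≤
      (max (B - A) (B' - A'))⁻¹ * (min B B' - max A A') := by
  have hM : 0 < max (B - A) (B' - A') := lt_max_of_lt_left (sub_pos.2 h)
  have hlen : max (B - A) (B' - A') - (|A - A'| + |B - B'|) ≤ min B B' - max A A' := by
    grind
  rw [← div_eq_inv_mul, le_div_iff₀ hM, sub_mul, div_mul_cancel₀ _ hM.ne', one_mul]
  exact hlen

lemma exists_isCoupling_lineMap_eq {A B A' B' : ℝ} (h : A < B) (h' : A' < B') :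
    ∃ γ, IsCoupling γ ((volume : Measure ℝ).restrict (Icc 0 1))
        ((volume : Measure ℝ).restrict (Icc 0 1)) ∧
      ENNReal.ofReal (1 - (|A - A'| + |B - B'|) / max (B - A) (B' - A')) ≤
        γ {l | AffineMap.lineMap A B l.1 = AffineMap.lineMap A' B' l.2} := by
  set M := max (B - A) (B' - A')
  have hM0 : 0 < M := lt_max_of_lt_left (sub_pos.2 h)
  set ρ := ENNReal.ofReal M⁻¹ • (volume : Measure ℝ).restrict (Icc A B ∩ Icc A' B') with hρ
  have hρ_le : ρ ≤ volume[|Icc A B] := smul_restrict_le_cond _ inter_subset_left <| by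
    rw [Real.volume_Icc, ENNReal.ofReal_inv_of_pos hM0]
    gcongr
    exact le_max_left _ _
  have hρ_le' : ρ ≤ volume[|Icc A' B'] := smul_restrict_le_cond _ inter_subset_right <| by
    rw [Real.volume_Icc, ENNReal.ofReal_inv_of_pos hM0]
    gcongr
    exact le_max_right _ _
  rw [← map_affineHomeomorph_volume_restrict_Icc h] at hρ_le
  rw [← map_affineHomeomorph_volume_restrict_Icc h'] at hρ_le'
  obtain ⟨γ, hγ, hle⟩ := exists_isCoupling_le_measure_eq rfl _ _ hρ_le hρ_le'
  refine ⟨γ, hγ, ?_⟩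
  calc _ ≤ ENNReal.ofReal (M⁻¹ * (min B B' - max A A')) :=
        ENNReal.ofReal_le_ofReal (one_sub_div_le_overlap h)
    _ = ρ univ := by
      rw [ENNReal.ofReal_mul (inv_nonneg.2 hM0.le), hρ, Measure.smul_apply,
        Measure.restrict_apply_univ, Icc_inter_Icc, Real.volume_Icc, smul_eq_mul]
    _ ≤ _ := hle
    _ = _ := by
      simp only [Homeomorph.toMeasurableEquiv_coe, affineHomeomorph_apply,
        AffineMap.lineMap_apply_ring', mul_comm]

end UniformOnIntervals

section SubsetWeight

variable {n : ℕ} {S : Finset (Fin n)} {i j : Fin n}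

lemma stepM_fst_zero (x : Fin n × Fin 2 → ℝ) (i j : Fin n) (l : ℝ) :
    stepM n x ((i, j), l) (i, 0) =
      AffineMap.lineMap (max 0 (x (i, 0) + x (j, 0) - 2)) (min 2 (x (i, 0) + x (j, 0))) l := by
  simp only [stepM, if_true, AffineMap.lineMap_apply_ring]
  split_ifs with hd
  · rw [max_eq_left (by linarith), min_eq_right (by linarith)]
    ring
  · rw [max_eq_right (by linarith), min_eq_left (by linarith)]
    ring

lemma sum_stepM_eq_lineMap (x : Fin n × Fin 2 → ℝ) (hi : i ∈ S) (hj : j ∉ S) (l : ℝ) :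
    ∑ s ∈ S, stepM n x ((i, j), l) (s, 0) =
      AffineMap.lineMap (∑ s ∈ S.erase i, x (s, 0) + max 0 (x (i, 0) + x (j, 0) - 2))
        (∑ s ∈ S.erase i, x (s, 0) + min 2 (x (i, 0) + x (j, 0))) l := by
  have hrest : ∑ s ∈ S.erase i, stepM n x ((i, j), l) (s, 0) = ∑ s ∈ S.erase i, x (s, 0) := by
    refine Finset.sum_congr rfl fun s hs ↦ ?_
    have hsi : s ≠ i := Finset.ne_of_mem_erase hs
    have hsj : s ≠ j := ne_of_mem_of_not_mem (Finset.mem_of_mem_erase hs) hj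
    simp [stepM, hsi, hsj]
  rw [← Finset.sum_erase_add S _ hi, hrest, stepM_fst_zero]
  simp only [AffineMap.lineMap_apply_ring]
  ring

lemma abs_sum_erase_add_sub_le {ι : Type*} [Fintype ι] [DecidableEq ι] {u v : ι → ℝ} {ε : ℝ}
    (h : ∀ s, |u s - v s| ≤ ε) {S : Finset ι} {i j : ι} (hi : i ∈ S) (hj : j ∉ S) {f : ℝ → ℝ}
    (hf : LipschitzWith 1 f) :
    |(∑ s ∈ S.erase i, u s + f (u i + u j)) - (∑ s ∈ S.erase i, v s + f (v i + v j))| ≤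
      Fintype.card ι * ε := by
  have hε : 0 ≤ ε := (abs_nonneg _).trans (h i)
  have hsum : |∑ s ∈ S.erase i, u s - ∑ s ∈ S.erase i, v s| ≤ (S.erase i).card * ε := by
    rw [← Finset.sum_sub_distrib, ← nsmul_eq_mul]
    exact (Finset.abs_sum_le_sum_abs _ _).trans (Finset.sum_le_card_nsmul _ _ ε fun s _ ↦ h s)
  have hpair : |f (u i + u j) - f (v i + v j)| ≤ 2 * ε := by
    calc |f (u i + u j) - f (v i + v j)| ≤ |u i + u j - (v i + v j)| := by
          simpa [Real.dist_eq] using hf.dist_le_mul (u i + u j) (v i + v j)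
      _ = |(u i - v i) + (u j - v j)| := by rw [add_sub_add_comm]
      _ ≤ |u i - v i| + |u j - v j| := abs_add_le _ _
      _ ≤ 2 * ε := by linarith [h i, h j]
  have hcard : (S.erase i).card + 2 ≤ Fintype.card ι := by
    have := (insert j S).card_le_univ
    rwa [Finset.card_insert_of_notMem hj, ← Finset.card_erase_add_one hi] at this
  calc _ ≤ |∑ s ∈ S.erase i, u s - ∑ s ∈ S.erase i, v s| + |f (u i + u j) - f (v i + v j)| := by
        rw [add_sub_add_comm]
        exact abs_add_le _ _
    _ ≤ ((S.erase i).card + 2) * ε := by linarith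
    _ ≤ Fintype.card ι * ε := by
      gcongr
      exact_mod_cast hcard

lemma two_mul_le_min_sub_max {p q δ : ℝ} (hp : p ∈ Icc δ (2 - δ)) (hq : q ∈ Icc δ (2 - δ)) :
    2 * δ ≤ min 2 (p + q) - max 0 (p + q - 2) := by
  grind

theorem narrow_matrices_subset_coupling_general {x y : Fin n × Fin 2 → ℝ} {ε δ : ℝ} (hδ : 0 < δ)
    (hxy : ∀ s, |x (s, 0) - y (s, 0)| ≤ ε) (hx : ∀ s, x (s, 0) ∈ Icc δ (2 - δ))
    (hy : ∀ s, y (s, 0) ∈ Icc δ (2 - δ)) (hi : i ∈ S) (hj : j ∉ S) :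
    ∃ γ, IsCoupling γ ((volume : Measure ℝ).restrict (Icc 0 1))
        ((volume : Measure ℝ).restrict (Icc 0 1)) ∧
      ENNReal.ofReal (1 - n * ε / δ) ≤
        γ {l | ∑ s ∈ S, stepM n x ((i, j), l.1) (s, 0) =
               ∑ s ∈ S, stepM n y ((i, j), l.2) (s, 0)} := by
  simp only [sum_stepM_eq_lineMap _ hi hj]
  set A := ∑ s ∈ S.erase i, x (s, 0) + max 0 (x (i, 0) + x (j, 0) - 2)
  set B := ∑ s ∈ S.erase i, x (s, 0) + min 2 (x (i, 0) + x (j, 0))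
  set A' := ∑ s ∈ S.erase i, y (s, 0) + max 0 (y (i, 0) + y (j, 0) - 2)
  set B' := ∑ s ∈ S.erase i, y (s, 0) + min 2 (y (i, 0) + y (j, 0))
  have hlen : 2 * δ ≤ B - A := by linarith [two_mul_le_min_sub_max (hx i) (hx j)]
  have hlen' : 2 * δ ≤ B' - A' := by linarith [two_mul_le_min_sub_max (hy i) (hy j)]
  have hleft : |A - A'| ≤ n * ε := by
    have hLip : LipschitzWith 1 fun r : ℝ ↦ max 0 (r - 2) :=
      (LipschitzWith.of_dist_le_mul fun r s ↦ by simp).const_max 0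
    simpa using abs_sum_erase_add_sub_le hxy hi hj hLip
  have hright : |B - B'| ≤ n * ε := by
    simpa using abs_sum_erase_add_sub_le hxy hi hj (LipschitzWith.id.const_min 2)
  obtain ⟨γ, hγ, hle⟩ := exists_isCoupling_lineMap_eq (A := A) (B := B) (A' := A') (B' := B')
    (by linarith) (by linarith)
  refine ⟨γ, hγ, (ENNReal.ofReal_le_ofReal (sub_le_sub_left ?_ 1)).trans hle⟩
  have hnε : 0 ≤ n * ε := (abs_nonneg _).trans hleft
  calc (|A - A'| + |B - B'|) / max (B - A) (B' - A') ≤ (n * ε + n * ε) / (2 * δ) := by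
        gcongr
        exact hlen.trans (le_max_left _ _)
    _ = n * ε / δ := by rw [← two_mul, mul_div_mul_left _ _ two_ne_zero]

end SubsetWeight

lemma mul_rpow_neg_div_rpow_neg_le {t : ℝ} (ht : 1 ≤ t) (a b : ℝ) :
    t * t ^ (-a) / t ^ (-b) ≤ 4 * t ^ (b + 2 - a) := by
  have ht0 : 0 < t := one_pos.trans_le ht
  calc t * t ^ (-a) / t ^ (-b) = t ^ (1 + -a - -b) := by
        rw [Real.rpow_sub ht0, Real.rpow_add ht0, Real.rpow_one]
    _ ≤ t ^ (b + 2 - a) := Real.rpow_le_rpow_of_exponent_le ht (by linarith)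
    _ ≤ 4 * t ^ (b + 2 - a) := by linarith [Real.rpow_nonneg ht0.le (b + 2 - a)]

/-- Subset-coupling lemma on narrow matrices: for all sufficiently large `n`, for nearby
points bounded away from the boundary there is a coupling of the uniform update variables
making the `S`-weights of the first columns agree with probability `≥ 1 - 4 n^{b+2-a}`. -/
theorem narrow_matrices_subset_coupling
    (a b : ℝ) (hb : 0 < b) (hba : b < a - 2) :
    ∃ N : ℕ, ∀ n ≥ N, ∀ x y : Fin n × Fin 2 → ℝ, x ∈ MSet n → y ∈ MSet n →
      (∀ q, |x q - y q| ≤ (n : ℝ) ^ (-a)) →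
      (∀ q, (n : ℝ) ^ (-b) ≤ x q ∧ (n : ℝ) ^ (-b) ≤ y q ∧
        (n : ℝ) ^ (-b) ≤ 2 - x q ∧ (n : ℝ) ^ (-b) ≤ 2 - y q) →
      ∀ S : Finset (Fin n), ∀ i ∈ S, ∀ j ∉ S,
        ∃ μ : Measure (ℝ × ℝ),
          IsProbabilityMeasure μ ∧
          μ.map Prod.fst = (volume : Measure ℝ).restrict (Set.Icc 0 1) ∧
          μ.map Prod.snd = (volume : Measure ℝ).restrict (Set.Icc 0 1) ∧
          ENNReal.ofReal (1 - 4 * (n : ℝ) ^ (b + 2 - a)) ≤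
            μ {l | ∑ s ∈ S, stepM n x ((i, j), l.1) (s, 0) =
                   ∑ s ∈ S, stepM n y ((i, j), l.2) (s, 0)} := by
  refine ⟨1, fun n hn x y _ _ hxy hbd S i hi j hj ↦ ?_⟩
  have hn : (1 : ℝ) ≤ n := by exact_mod_cast hn
  obtain ⟨γ, hγ, hle⟩ := narrow_matrices_subset_coupling_general
    (Real.rpow_pos_of_pos (one_pos.trans_le hn) (-b)) (fun s ↦ hxy (s, 0))
    (fun s ↦ ⟨(hbd (s, 0)).1, by linarith [(hbd (s, 0)).2.2.1]⟩)
    (fun s ↦ ⟨(hbd (s, 0)).2.1, by linarith [(hbd (s, 0)).2.2.2]⟩) hi hj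
  exact ⟨γ, hγ.isProbabilityMeasure, hγ.fst_eq, hγ.snd_eq, le_trans
    (ENNReal.ofReal_le_ofReal (sub_le_sub_left (mul_rpow_neg_div_rpow_neg_le hn a b) 1)) hle⟩

end
end

section
/- Let K be the symmetric stochastic matrix on G with K(g,g) = 1 − 1/n and off-diagonal mass 1/(nm) assigned from g to gr for each r ∈ R. Let β_2 = 1 − γ be the second-largest eigenvalue of K and let v be a corresponding real eigenvector with ‖v‖_2 = 1, normalized (replacing v by −v if necessary) so that ∑_{g : v[g] ≥ 0} v[g]² ≥ 1/2. Let w ∈ Δ_G maximize the inner product ⟨w', v⟩ over w' ∈ Δ_G, and let (X_t) be the Gibbs sampler on Δ_G started from X_0 = w. Then for every d > 0 and every integer t ≥ 0, P[⟨X_t, v⟩ > d] ≥ (1 − γ)^t − 2d√n. -/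
open MeasureTheory

noncomputable section

variable (G : Type*) [Group G] [Fintype G] [DecidableEq G] [MeasurableSpace G]
  [DiscreteMeasurableSpace G]

/-- The simplex of probability vectors indexed by `G`. -/
def simplexG : Set (G → ℝ) := {x | (∀ g, 0 ≤ x g) ∧ ∑ g, x g = 1}

/-- The uniform (normalized `(n-1)`-dimensional Hausdorff) measure on the simplex. -/
def UG : Measure (G → ℝ) :=
  (μH[(Fintype.card G : ℝ) - 1] (simplexG G))⁻¹ •
    (μH[(Fintype.card G : ℝ) - 1]).restrict (simplexG G)

/-- One step of the Gibbs sampler on the simplex from update datum `(g, r, λ)`. -/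
def gibbsStepG (x : G → ℝ) (u : G × G × ℝ) : G → ℝ := fun h =>
  if h = u.1 then u.2.2 * (x u.1 + x (u.1 * u.2.1))
  else if h = u.1 * u.2.1 then (1 - u.2.2) * (x u.1 + x (u.1 * u.2.1))
  else x h

/-- Law of the random update datum: `g` uniform on `G`, `r` uniform on `R`,
`λ` uniform on `[0,1]`. -/
def driveG (R : Finset G) : Measure (G × G × ℝ) :=
  (unifOn (Finset.univ : Finset G)).prod
    ((unifOn R).prod ((volume : Measure ℝ).restrict (Set.Icc 0 1)))

/-- Law of the Gibbs sampler after `T` steps started at `x`. -/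
def lawG (R : Finset G) (x : G → ℝ) (T : ℕ) : Measure (G → ℝ) :=
  Measure.map (fun ω : Fin T → G × G × ℝ => (List.ofFn ω).foldl (gibbsStepG G) x)
    (Measure.pi fun _ => driveG G R)

/-- The transition matrix of the slowed simple random walk on `G`. -/
def KhatM (R : Finset G) : G → G → ℝ := fun z w =>
  if z = w then 1 - 2 / (Fintype.card G : ℝ)
  else if z⁻¹ * w ∈ R then 2 / ((Fintype.card G : ℝ) * R.card) else 0

/-- The spectral gap `γ̂ = 1 - λ̂₂` of `K̂`, with the second-largest eigenvalue
expressed by the variational (Courant–Fischer) characterization. -/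
def gapHat (R : Finset G) : ℝ :=
  1 - sSup {lam : ℝ | ∃ v : G → ℝ, ∑ g, v g = 0 ∧ ∑ g, (v g) ^ 2 = 1 ∧
    lam = ∑ g, ∑ h, v g * KhatM G R g h * v h}


/-- The edge-based random-walk transition matrix on `G`: `K(g,g) = 1 - 1/n` and
`K(g, gr) = 1/(nm)` for `r ∈ R`. -/
def Kmat (R : Finset G) : G → G → ℝ := fun g h =>
  if g = h then 1 - 1 / (Fintype.card G : ℝ)
  else if g⁻¹ * h ∈ R then 1 / ((Fintype.card G : ℝ) * R.card) else 0

/-- The second-largest eigenvalue `β₂` of `K`, via the variational (Courant–Fischer)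
characterization over vectors orthogonal to the constants. -/
def beta2 (R : Finset G) : ℝ :=
  sSup {lam : ℝ | ∃ v : G → ℝ, ∑ g, v g = 0 ∧ ∑ g, (v g) ^ 2 = 1 ∧
    lam = ∑ g, ∑ h, v g * Kmat G R g h * v h}

/-! By symmetry of `R` the expected effect of one step on a linear statistic is
`E[⟨X_{t+1}, v⟩ | X_t] = ⟨X_t, K v⟩`, so `E[⟨X_t, v⟩] = β ^ t * M` whenever `K v = β v`, where
`M = ⟨w, v⟩` is the maximum of `⟨·, v⟩` over the simplex.  As `⟨X_t, v⟩ ≤ M` always, this mean is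
at most `d + M * P[⟨X_t, v⟩ > d]`.  Finally `M = max v`, and the positive part of `v` carries
squared mass at least `1 / 4` on at most `n` points, so `1 / M ≤ 2 √n`. -/

open Set
open scoped Matrix

section UniformMeasure

variable {α β : Type*} [MeasurableSpace α] [MeasurableSpace β]

lemma isProbabilityMeasure_unifOn {s : Finset α} (hs : s.Nonempty) :
    IsProbabilityMeasure (unifOn s) := by
  constructor
  simp only [unifOn, Measure.smul_apply, Measure.finsetSum_apply, measure_univ, Finset.sum_const,
    nsmul_eq_mul, mul_one, smul_eq_mul]
  exact ENNReal.inv_mul_cancel (by simpa using hs.ne_empty) (by simp)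

lemma ae_unifOn_mem [MeasurableSingletonClass α] (s : Finset α) : ∀ᵐ a ∂unifOn s, a ∈ s :=
  Measure.ae_smul_measure (ae_finsetSum_measure_iff.2 fun a ha => by simpa [ae_dirac_eq]) _

lemma unifOn_prod (s : Finset α) (ν : Measure β) [SFinite ν] :
    (unifOn s).prod ν = (s.card : ENNReal)⁻¹ • ∑ a ∈ s, ν.map (Prod.mk a) := by
  rw [unifOn, Measure.prod_smul_left, ← Measure.sum_coe_finset, Measure.prod_sum_left,
    ← Measure.sum_coe_finset]
  simp only [Measure.dirac_prod]

variable [MeasurableSingletonClass α] {E : Type*} [NormedAddCommGroup E] {s : Finset α}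
  {ν : Measure β} [SFinite ν] {F : α × β → E}

lemma integrable_unifOn_prod (hs : s.Nonempty) (hF : ∀ a ∈ s, Integrable (fun b => F (a, b)) ν) :
    Integrable F ((unifOn s).prod ν) := by
  rw [unifOn_prod]
  refine Integrable.smul_measure (integrable_finsetSum_measure.2 fun a ha => ?_)
    (ENNReal.inv_ne_top.2 (by simpa using hs.ne_empty))
  exact (measurableEmbedding_prodMk_left a).integrable_map_iff.2 (hF a ha)

lemma integral_unifOn_prod [NormedSpace ℝ E]
    (hF : ∀ a ∈ s, Integrable (fun b => F (a, b)) ν) :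
    ∫ p, F p ∂(unifOn s).prod ν = (s.card : ℝ)⁻¹ • ∑ a ∈ s, ∫ b, F (a, b) ∂ν := by
  rw [unifOn_prod, integral_smul_measure, integral_finsetSum_measure fun a ha =>
    (measurableEmbedding_prodMk_left a).integrable_map_iff.2 (hF a ha)]
  simp only [(measurableEmbedding_prodMk_left _).integral_map, ENNReal.toReal_inv,
    ENNReal.toReal_natCast]

end UniformMeasure

section IteratedRandomMaps

variable {S U : Type*} [MeasurableSpace S] [MeasurableSpace U] {f : S → U → S} {μ : Measure U}

/-- The law of the state reached from `x` after `T` applications of the random map `f · u`, where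
the successive values of `u` are independent with law `μ`. -/
def iterLaw (f : S → U → S) (μ : Measure U) (x : S) (T : ℕ) : Measure S :=
  Measure.map (fun ω : Fin T → U => (List.ofFn ω).foldl f x) (Measure.pi fun _ => μ)

lemma measurable_foldl_ofFn (hf : Measurable (Function.uncurry f)) (T : ℕ) :
    Measurable fun p : S × (Fin T → U) => (List.ofFn p.2).foldl f p.1 := by
  induction T with
  | zero => simpa using measurable_fst
  | succ T ih =>
    have hfirst : Measurable fun p : S × (Fin (T + 1) → U) => f p.1 (p.2 0) :=
      hf.comp (measurable_fst.prodMk ((measurable_pi_apply 0).comp measurable_snd))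
    simp only [List.ofFn_succ, List.foldl_cons]
    exact ih.comp (hfirst.prodMk (by fun_prop))

lemma measurable_foldl_ofFn_left (hf : Measurable (Function.uncurry f)) (x : S) (T : ℕ) :
    Measurable fun ω : Fin T → U => (List.ofFn ω).foldl f x :=
  (measurable_foldl_ofFn hf T).comp measurable_prodMk_left

lemma isProbabilityMeasure_iterLaw [IsProbabilityMeasure μ] (hf : Measurable (Function.uncurry f))
    (x : S) (T : ℕ) : IsProbabilityMeasure (iterLaw f μ x T) :=
  Measure.isProbabilityMeasure_map (measurable_foldl_ofFn_left hf x T).aemeasurable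

lemma ae_iterLaw_mem [SigmaFinite μ] (hf : Measurable (Function.uncurry f)) {s : Set S}
    (hs : MeasurableSet s) (hfs : ∀ᵐ u ∂μ, ∀ x ∈ s, f x u ∈ s) {x : S} (hx : x ∈ s) (T : ℕ) :
    ∀ᵐ y ∂iterLaw f μ x T, y ∈ s := by
  rw [iterLaw,
    ae_map_iff (p := (· ∈ s)) (measurable_foldl_ofFn_left hf x T).aemeasurable hs]
  have hcoord : ∀ᵐ ω ∂Measure.pi fun _ : Fin T => μ, ∀ i, ∀ x ∈ s, f x (ω i) ∈ s :=
    ae_all_iff.2 fun i => (Measure.quasiMeasurePreserving_eval (fun _ => μ) i).ae hfs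
  filter_upwards [hcoord] with ω hω
  refine List.foldlRecOn _ f hx fun y hy u hu => ?_
  obtain ⟨i, rfl⟩ := List.mem_ofFn.1 hu
  exact hω i y hy

lemma iterLaw_zero (x : S) : iterLaw f μ x 0 = Measure.dirac x := by
  simp [iterLaw]

lemma measurable_foldl_cons_ofFn (hf : Measurable (Function.uncurry f)) (x : S) (T : ℕ) :
    Measurable fun p : U × (Fin T → U) => (List.ofFn p.2).foldl f (f x p.1) :=
  (measurable_foldl_ofFn hf T).comp
    ((hf.comp (measurable_const.prodMk measurable_fst)).prodMk measurable_snd)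

lemma iterLaw_succ [SigmaFinite μ] (hf : Measurable (Function.uncurry f)) (x : S) (T : ℕ) :
    iterLaw f μ x (T + 1) = (μ.prod (Measure.pi fun _ : Fin T => μ)).map
      fun p => (List.ofFn p.2).foldl f (f x p.1) := by
  rw [iterLaw, ← (measurePreserving_piFinSuccAbove (fun _ : Fin (T + 1) => μ) 0).map_eq,
    Measure.map_map (measurable_foldl_cons_ofFn hf x T) (MeasurableEquiv.measurable _)]
  congr 1
  funext ω
  simp [List.ofFn_succ, MeasurableEquiv.piFinSuccAbove, Fin.tail_def]

lemma integral_iterLaw_succ [SigmaFinite μ] (hf : Measurable (Function.uncurry f)) {φ : S → ℝ}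
    (hφ : Measurable φ) {x : S} {T : ℕ} (hint : Integrable φ (iterLaw f μ x (T + 1))) :
    ∫ y, φ y ∂iterLaw f μ x (T + 1) = ∫ u, ∫ y, φ y ∂iterLaw f μ (f x u) T ∂μ := by
  have hmeas := measurable_foldl_cons_ofFn hf x T
  rw [iterLaw_succ hf] at hint ⊢
  rw [integral_map hmeas.aemeasurable hφ.aestronglyMeasurable,
    integral_prod (fun p => φ ((List.ofFn p.2).foldl f (f x p.1))) (hint.comp_measurable hmeas)]
  simp only [iterLaw, integral_map (measurable_foldl_ofFn_left hf _ T).aemeasurable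
    hφ.aestronglyMeasurable]

variable [IsFiniteMeasure μ] {s : Set S} {φ : S → ℝ}

lemma integrable_iterLaw (hf : Measurable (Function.uncurry f)) (hs : MeasurableSet s)
    (hfs : ∀ᵐ u ∂μ, ∀ x ∈ s, f x u ∈ s) (hφ : Measurable φ) (hbdd : ∃ C, ∀ x ∈ s, ‖φ x‖ ≤ C)
    {x : S} (hx : x ∈ s) (T : ℕ) : Integrable φ (iterLaw f μ x T) := by
  obtain ⟨C, hC⟩ := hbdd
  have : IsFiniteMeasure (iterLaw f μ x T) := by unfold iterLaw; infer_instance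
  exact .of_bound hφ.aestronglyMeasurable C ((ae_iterLaw_mem hf hs hfs hx T).mono hC)

lemma integral_iterLaw_eq_pow_mul (hf : Measurable (Function.uncurry f)) (hs : MeasurableSet s)
    (hfs : ∀ᵐ u ∂μ, ∀ x ∈ s, f x u ∈ s) (hφ : Measurable φ) (hbdd : ∃ C, ∀ x ∈ s, ‖φ x‖ ≤ C)
    {β : ℝ} (hstep : ∀ x ∈ s, ∫ u, φ (f x u) ∂μ = β * φ x) {x : S} (hx : x ∈ s) (T : ℕ) :
    ∫ y, φ y ∂iterLaw f μ x T = β ^ T * φ x := by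
  induction T generalizing x with
  | zero => rw [iterLaw_zero, integral_dirac' _ _ hφ.stronglyMeasurable, pow_zero, one_mul]
  | succ T ih =>
    calc ∫ y, φ y ∂iterLaw f μ x (T + 1)
        = ∫ u, ∫ y, φ y ∂iterLaw f μ (f x u) T ∂μ :=
          integral_iterLaw_succ hf hφ (integrable_iterLaw hf hs hfs hφ hbdd hx _)
      _ = ∫ u, β ^ T * φ (f x u) ∂μ := integral_congr_ae (hfs.mono fun u hu => ih (hu x hx))
      _ = β ^ (T + 1) * φ x := by rw [integral_const_mul, hstep x hx, pow_succ, mul_assoc]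

end IteratedRandomMaps

lemma integral_le_add_sub_mul_measureReal {Ω : Type*} [MeasurableSpace Ω] {μ : Measure Ω}
    [IsProbabilityMeasure μ] {X : Ω → ℝ} (hX : Integrable X μ) {M : ℝ} (hM : ∀ᵐ ω ∂μ, X ω ≤ M)
    (d : ℝ) : ∫ ω, X ω ∂μ ≤ d + (M - d) * μ.real {ω | d < X ω} := by
  have hmarkov : (M - d) * μ.real {ω | M - d ≤ M - X ω} ≤ ∫ ω, (M - X ω) ∂μ :=
    mul_meas_ge_le_integral_of_nonneg (hM.mono fun ω hω => sub_nonneg.2 hω)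
      ((integrable_const M).sub hX) _
  have hcompl : {ω | M - d ≤ M - X ω} = {ω | d < X ω}ᶜ := by
    ext ω
    simp only [mem_ofPred_eq, mem_compl_iff, not_lt, sub_le_sub_iff_left]
  rw [hcompl, probReal_compl_eq_one_sub₀ (nullMeasurableSet_lt aemeasurable_const hX.aemeasurable),
    integral_sub (integrable_const M) hX, integral_const, probReal_univ, one_smul] at hmarkov
  linarith

section Coordinates

variable {ι : Type*} [Fintype ι] {v : ι → ℝ}

lemma one_le_two_mul_sqrt_card_mul {M : ℝ} (hv : ∀ i, v i ≤ M)
    (hsign : 1 / 4 ≤ ∑ i with 0 ≤ v i, v i ^ 2) : 1 ≤ 2 * √(Fintype.card ι) * M := by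
  obtain ⟨i, hi⟩ : (Finset.univ.filter fun i => 0 ≤ v i).Nonempty :=
    Finset.nonempty_of_sum_ne_zero (f := fun i => v i ^ 2) (by linarith)
  have hM : 0 ≤ M := (Finset.mem_filter.1 hi).2.trans (hv i)
  have hsum : ∑ i with 0 ≤ v i, v i ^ 2 ≤ Fintype.card ι * M ^ 2 := by
    calc ∑ i with 0 ≤ v i, v i ^ 2
        ≤ ∑ i with 0 ≤ v i, M ^ 2 :=
          Finset.sum_le_sum fun i hi => pow_le_pow_left₀ (Finset.mem_filter.1 hi).2 (hv i) 2
      _ ≤ ∑ _i : ι, M ^ 2 :=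
          Finset.sum_le_sum_of_subset_of_nonneg (Finset.filter_subset _ _)
            fun _ _ _ => sq_nonneg M
      _ = Fintype.card ι * M ^ 2 := by simp
  have hsq : (1 : ℝ) ^ 2 ≤ (2 * √(Fintype.card ι) * M) ^ 2 := by
    rw [mul_pow, mul_pow, Real.sq_sqrt (Nat.cast_nonneg _)]
    linarith
  exact le_of_sq_le_sq hsq (by positivity)

lemma le_of_forall_stdSimplex_dotProduct_le {M : ℝ} (hM : ∀ x ∈ stdSimplex ℝ ι, x ⬝ᵥ v ≤ M)
    (i : ι) : v i ≤ M := by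
  classical
  simpa using hM _ (single_mem_stdSimplex ℝ i)

lemma exists_norm_dotProduct_le_of_mem_stdSimplex (v : ι → ℝ) :
    ∃ C, ∀ x ∈ stdSimplex ℝ ι, ‖x ⬝ᵥ v‖ ≤ C :=
  (isCompact_stdSimplex ℝ ι).exists_bound_of_continuousOn (by fun_prop)

end Coordinates

section CayleyWalk

variable {Γ : Type*} [Group Γ] [Fintype Γ] {R : Finset Γ}

lemma sum_sum_mul_right_swap {A : Type*} [AddCommMonoid A] (hsym : ∀ r ∈ R, r⁻¹ ∈ R)
    (F : Γ → Γ → A) : ∑ g, ∑ r ∈ R, F (g * r) g = ∑ g, ∑ r ∈ R, F g (g * r) := by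
  rw [Finset.sum_comm, Finset.sum_comm (s := Finset.univ)]
  refine Finset.sum_nbij' (·⁻¹) (·⁻¹) hsym hsym (by simp) (by simp) fun r _ => ?_
  rw [← Equiv.sum_comp (Equiv.mulRight r) fun g => F g (g * r⁻¹)]
  simp

lemma sum_sum_sub_mul_sub (hsym : ∀ r ∈ R, r⁻¹ ∈ R) (x v : Γ → ℝ) :
    ∑ g, ∑ r ∈ R, (x (g * r) - x g) * (v g - v (g * r)) =
      2 * ∑ g, ∑ r ∈ R, x g * (v (g * r) - v g) := by
  calc ∑ g, ∑ r ∈ R, (x (g * r) - x g) * (v g - v (g * r))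
      = ∑ g, ∑ r ∈ R, x (g * r) * (v g - v (g * r))
          + ∑ g, ∑ r ∈ R, x g * (v (g * r) - v g) := by
        simp only [← Finset.sum_add_distrib]
        exact Finset.sum_congr rfl fun g _ => Finset.sum_congr rfl fun r _ => by ring
    _ = 2 * ∑ g, ∑ r ∈ R, x g * (v (g * r) - v g) := by
        rw [sum_sum_mul_right_swap hsym fun g h => x g * (v h - v g), two_mul]

variable [DecidableEq Γ]

lemma Kmat_mulVec (hid : (1 : Γ) ∉ R) (hne : R.Nonempty) (v : Γ → ℝ) (g : Γ) :
    (Matrix.of (Kmat Γ R) *ᵥ v) g =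
      v g + (Fintype.card Γ * R.card : ℝ)⁻¹ * ∑ r ∈ R, (v (g * r) - v g) := by
  have hentry (h : Γ) : Kmat Γ R g h * v h =
      (if h = g then (1 - 1 / (Fintype.card Γ : ℝ)) * v g else 0) +
        (if g⁻¹ * h ∈ R then (Fintype.card Γ * R.card : ℝ)⁻¹ * v h else 0) := by
    rcases eq_or_ne g h with rfl | hgh
    · simp [Kmat, hid]
    · simp [Kmat, hgh, hgh.symm]
  have hshift : ∑ h, (if g⁻¹ * h ∈ R then (Fintype.card Γ * R.card : ℝ)⁻¹ * v h else 0) =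
      (Fintype.card Γ * R.card : ℝ)⁻¹ * ∑ r ∈ R, v (g * r) := by
    rw [← Equiv.sum_comp (Equiv.mulLeft g)]
    simp [Finset.mul_sum]
  have hcard : (R.card : ℝ) ≠ 0 := Nat.cast_ne_zero.2 hne.card_ne_zero
  simp only [Matrix.mulVec, dotProduct, Matrix.of_apply, hentry, Finset.sum_add_distrib, hshift,
    Finset.sum_ite_eq', Finset.mem_univ, if_true, Finset.sum_sub_distrib, Finset.sum_const,
    nsmul_eq_mul]
  field_simp
  ring

end CayleyWalk

section GibbsStep

variable {Γ : Type*} [Group Γ] [DecidableEq Γ]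

lemma gibbsStepG_eq_add (x : Γ → ℝ) (g : Γ) {r : Γ} (hr : r ≠ 1) (l : ℝ) :
    gibbsStepG Γ x (g, r, l) =
      x + (l * (x g + x (g * r)) - x g) • (Pi.single g 1 - Pi.single (g * r) 1) := by
  have hgr : g * r ≠ g := by simpa using hr
  funext h
  rcases eq_or_ne h g with rfl | hg
  · simp [gibbsStepG, hgr.symm]
  · rcases eq_or_ne h (g * r) with rfl | hh
    · simp only [gibbsStepG, hgr, ↓reduceIte, Pi.add_apply, Pi.smul_apply, Pi.sub_apply, ne_eq,
        not_false_eq_true, Pi.single_eq_of_ne, Pi.single_eq_same, zero_sub, smul_eq_mul]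
      ring
    · simp [gibbsStepG, hg, hh]

lemma measurable_uncurry_gibbsStepG [Countable Γ] [MeasurableSpace Γ]
    [MeasurableSingletonClass Γ] : Measurable (Function.uncurry (gibbsStepG Γ)) := by
  have hfixed : Measurable fun q : ((Γ → ℝ) × ℝ) × (Γ × Γ) =>
      gibbsStepG Γ q.1.1 (q.2.1, q.2.2, q.1.2) := by
    refine measurable_from_prod_countable_left fun e => measurable_pi_lambda _ fun h => ?_
    simp only [gibbsStepG]
    split_ifs <;> fun_prop
  have hreorder : Measurable fun p : (Γ → ℝ) × (Γ × Γ × ℝ) =>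
      ((p.1, p.2.2.2), (p.2.1, p.2.2.1)) := by fun_prop
  exact hfixed.comp hreorder

variable [Fintype Γ]

lemma gibbsStepG_dotProduct (x v : Γ → ℝ) (g : Γ) {r : Γ} (hr : r ≠ 1) (l : ℝ) :
    gibbsStepG Γ x (g, r, l) ⬝ᵥ v =
      x ⬝ᵥ v + (l * (x g + x (g * r)) - x g) * (v g - v (g * r)) := by
  rw [gibbsStepG_eq_add x g hr, add_dotProduct, smul_dotProduct, sub_dotProduct,
    single_one_dotProduct, single_one_dotProduct, smul_eq_mul]

lemma gibbsStepG_mem_stdSimplex {x : Γ → ℝ} (hx : x ∈ stdSimplex ℝ Γ) (g : Γ) {r : Γ}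
    (hr : r ≠ 1) {l : ℝ} (hl : l ∈ Icc (0 : ℝ) 1) :
    gibbsStepG Γ x (g, r, l) ∈ stdSimplex ℝ Γ := by
  have hpair : 0 ≤ x g + x (g * r) := add_nonneg (hx.1 _) (hx.1 _)
  refine ⟨fun h => ?_, ?_⟩
  · simp only [gibbsStepG]
    split_ifs
    · exact mul_nonneg hl.1 hpair
    · exact mul_nonneg (sub_nonneg.2 hl.2) hpair
    · exact hx.1 h
  · rw [← dotProduct_one, gibbsStepG_dotProduct x 1 g hr, dotProduct_one, hx.2]
    simp

lemma integral_gibbsStepG_dotProduct (x v : Γ → ℝ) (g : Γ) {r : Γ} (hr : r ≠ 1) :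
    ∫ l in Icc (0 : ℝ) 1, gibbsStepG Γ x (g, r, l) ⬝ᵥ v =
      x ⬝ᵥ v + (x (g * r) - x g) * (v g - v (g * r)) / 2 := by
  simp only [gibbsStepG_dotProduct x v g hr]
  rw [integral_Icc_eq_integral_Ioc, ← intervalIntegral.integral_of_le zero_le_one,
    intervalIntegral.integral_add (by simp) (Continuous.intervalIntegrable (by fun_prop) _ _),
    intervalIntegral.integral_mul_const,
    intervalIntegral.integral_sub (Continuous.intervalIntegrable (by fun_prop) _ _) (by simp),
    intervalIntegral.integral_mul_const, integral_id]
  simp only [intervalIntegral.integral_const, smul_eq_mul]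
  ring

end GibbsStep

section Drive

variable {Γ : Type*} [Fintype Γ] [MeasurableSpace Γ] {R : Finset Γ}

lemma isProbabilityMeasure_driveG [Nonempty Γ] (hne : R.Nonempty) :
    IsProbabilityMeasure (driveG Γ R) := by
  have := isProbabilityMeasure_unifOn hne
  have := isProbabilityMeasure_unifOn (Finset.univ_nonempty (α := Γ))
  have : IsProbabilityMeasure ((volume : Measure ℝ).restrict (Icc 0 1)) := ⟨by simp⟩
  unfold driveG
  infer_instance

variable [MeasurableSingletonClass Γ]

lemma ae_driveG_mem (R : Finset Γ) : ∀ᵐ u ∂driveG Γ R, u.2.1 ∈ R ∧ u.2.2 ∈ Icc (0 : ℝ) 1 := by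
  have hpair : ∀ᵐ q ∂(unifOn R).prod (volume.restrict (Icc (0 : ℝ) 1)),
      q.1 ∈ R ∧ q.2 ∈ Icc (0 : ℝ) 1 :=
    (Measure.quasiMeasurePreserving_fst.ae (ae_unifOn_mem R)).and
      (Measure.quasiMeasurePreserving_snd.ae (ae_restrict_mem measurableSet_Icc))
  exact Measure.quasiMeasurePreserving_snd.ae hpair

lemma integral_driveG {E : Type*} [NormedAddCommGroup E] [NormedSpace ℝ E] (hne : R.Nonempty)
    {F : Γ × Γ × ℝ → E} (hF : ∀ g, ∀ r ∈ R, IntegrableOn (fun l => F (g, r, l)) (Icc 0 1)) :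
    ∫ u, F u ∂driveG Γ R = (Fintype.card Γ : ℝ)⁻¹ • ∑ g, (R.card : ℝ)⁻¹ •
      ∑ r ∈ R, ∫ l in Icc (0 : ℝ) 1, F (g, r, l) := by
  have := isProbabilityMeasure_unifOn hne
  rw [driveG, integral_unifOn_prod fun g _ => integrable_unifOn_prod hne (hF g), Finset.card_univ]
  congr! 2 with g
  exact integral_unifOn_prod (hF g)

end Drive

section GibbsSampler

variable {Γ : Type*} [Group Γ] [Fintype Γ] [DecidableEq Γ] [MeasurableSpace Γ]
  [MeasurableSingletonClass Γ] {R : Finset Γ}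

lemma ae_gibbsStepG_mem_stdSimplex (hid : (1 : Γ) ∉ R) :
    ∀ᵐ u ∂driveG Γ R, ∀ x ∈ stdSimplex ℝ Γ, gibbsStepG Γ x u ∈ stdSimplex ℝ Γ := by
  filter_upwards [ae_driveG_mem R] with u hu x hx
  exact gibbsStepG_mem_stdSimplex hx u.1 (ne_of_mem_of_not_mem hu.1 hid) hu.2

lemma integral_driveG_gibbsStepG_dotProduct (hsym : ∀ r ∈ R, r⁻¹ ∈ R) (hid : (1 : Γ) ∉ R)
    (hne : R.Nonempty) (x v : Γ → ℝ) :
    ∫ u, gibbsStepG Γ x u ⬝ᵥ v ∂driveG Γ R = x ⬝ᵥ (Matrix.of (Kmat Γ R) *ᵥ v) := by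
  have hr {r : Γ} (hrR : r ∈ R) : r ≠ 1 := ne_of_mem_of_not_mem hrR hid
  have hint (g : Γ) (r : Γ) (hrR : r ∈ R) :
      IntegrableOn (fun l => gibbsStepG Γ x (g, r, l) ⬝ᵥ v) (Icc 0 1) := by
    simp only [gibbsStepG_dotProduct x v g (hr hrR)]
    exact Continuous.integrableOn_Icc (by fun_prop)
  have hm : (R.card : ℝ) ≠ 0 := Nat.cast_ne_zero.2 hne.card_ne_zero
  have hn : (Fintype.card Γ : ℝ) ≠ 0 := Nat.cast_ne_zero.2 Fintype.card_ne_zero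
  calc ∫ u, gibbsStepG Γ x u ⬝ᵥ v ∂driveG Γ R
      = (Fintype.card Γ : ℝ)⁻¹ * ∑ g, (R.card : ℝ)⁻¹ *
          ∑ r ∈ R, (x ⬝ᵥ v + (x (g * r) - x g) * (v g - v (g * r)) / 2) := by
        rw [integral_driveG hne hint]
        simp only [smul_eq_mul]
        congr! 4 with g _ r hrR
        exact integral_gibbsStepG_dotProduct x v g (hr hrR)
    _ = x ⬝ᵥ v + (Fintype.card Γ * R.card : ℝ)⁻¹ *
          ((∑ g, ∑ r ∈ R, (x (g * r) - x g) * (v g - v (g * r))) / 2) := by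
        simp only [Finset.sum_add_distrib, ← Finset.mul_sum, ← Finset.sum_div, Finset.sum_const,
          Finset.card_univ, nsmul_eq_mul]
        field_simp
    _ = x ⬝ᵥ v + (Fintype.card Γ * R.card : ℝ)⁻¹ *
          ∑ g, ∑ r ∈ R, x g * (v (g * r) - v g) := by
        rw [sum_sum_sub_mul_sub hsym, mul_div_cancel_left₀ _ two_ne_zero]
    _ = x ⬝ᵥ (Matrix.of (Kmat Γ R) *ᵥ v) := by
        simp only [dotProduct, Kmat_mulVec hid hne, mul_add, Finset.sum_add_distrib,
          mul_left_comm (x _), ← Finset.mul_sum]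

lemma integral_lawG_dotProduct (hsym : ∀ r ∈ R, r⁻¹ ∈ R) (hid : (1 : Γ) ∉ R) (hne : R.Nonempty)
    {v : Γ → ℝ} {β : ℝ} (heig : Matrix.of (Kmat Γ R) *ᵥ v = β • v) {x : Γ → ℝ}
    (hx : x ∈ stdSimplex ℝ Γ) (t : ℕ) :
    ∫ y, y ⬝ᵥ v ∂lawG Γ R x t = β ^ t * (x ⬝ᵥ v) := by
  have := isProbabilityMeasure_driveG hne
  refine integral_iterLaw_eq_pow_mul measurable_uncurry_gibbsStepG
    (isClosed_stdSimplex ℝ Γ).measurableSet (ae_gibbsStepG_mem_stdSimplex hid)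
    (by fun_prop) (exists_norm_dotProduct_le_of_mem_stdSimplex v)
    (fun y _ => ?_) hx t
  rw [integral_driveG_gibbsStepG_dotProduct hsym hid hne, heig, dotProduct_smul, smul_eq_mul]

lemma pow_mul_dotProduct_le_lawG (hsym : ∀ r ∈ R, r⁻¹ ∈ R) (hid : (1 : Γ) ∉ R)
    (hne : R.Nonempty) {v : Γ → ℝ} {β : ℝ} (heig : Matrix.of (Kmat Γ R) *ᵥ v = β • v)
    {w : Γ → ℝ} (hw : w ∈ stdSimplex ℝ Γ) {M : ℝ} (hM : ∀ x ∈ stdSimplex ℝ Γ, x ⬝ᵥ v ≤ M)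
    (d : ℝ) (t : ℕ) :
    β ^ t * (w ⬝ᵥ v) ≤ d + (M - d) * (lawG Γ R w t).real {x | d < x ⬝ᵥ v} := by
  have := isProbabilityMeasure_driveG hne
  have hstep := measurable_uncurry_gibbsStepG (Γ := Γ)
  have hsimplex := (isClosed_stdSimplex ℝ Γ).measurableSet
  have hinv := ae_gibbsStepG_mem_stdSimplex hid
  have : IsProbabilityMeasure (lawG Γ R w t) := isProbabilityMeasure_iterLaw hstep w t
  have hint : Integrable (fun x => x ⬝ᵥ v) (lawG Γ R w t) :=
    integrable_iterLaw hstep hsimplex hinv (by fun_prop)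
      (exists_norm_dotProduct_le_of_mem_stdSimplex v) hw t
  have hle : ∀ᵐ x ∂lawG Γ R w t, x ⬝ᵥ v ≤ M :=
    (ae_iterLaw_mem hstep hsimplex hinv hw t).mono hM
  rw [← integral_lawG_dotProduct hsym hid hne heig hw t]
  exact integral_le_add_sub_mul_measureReal hint hle d

theorem gibbs_sampler_cayley_eigenvector_lower_bound_general (hsym : ∀ r ∈ R, r⁻¹ ∈ R)
    (hid : (1 : Γ) ∉ R) (hne : R.Nonempty) {v : Γ → ℝ} {β : ℝ}
    (heig : Matrix.of (Kmat Γ R) *ᵥ v = β • v) (hsign : 1 / 4 ≤ ∑ g with 0 ≤ v g, v g ^ 2)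
    {w : Γ → ℝ} (hw : w ∈ stdSimplex ℝ Γ) (hmax : ∀ x ∈ stdSimplex ℝ Γ, x ⬝ᵥ v ≤ w ⬝ᵥ v)
    {d : ℝ} (hd : 0 ≤ d) (t : ℕ) :
    ENNReal.ofReal (β ^ t - 2 * d * √(Fintype.card Γ)) ≤ lawG Γ R w t {x | d < x ⬝ᵥ v} := by
  set M := w ⬝ᵥ v
  set p := (lawG Γ R w t).real {x | d < x ⬝ᵥ v}
  have hM : 1 ≤ 2 * √(Fintype.card Γ) * M :=
    one_le_two_mul_sqrt_card_mul (le_of_forall_stdSimplex_dotProduct_le hmax) hsign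
  have hM_pos : 0 < M := pos_of_mul_pos_right (zero_lt_one.trans_le hM) (by positivity)
  have hmean : β ^ t * M ≤ d + (M - d) * p :=
    pow_mul_dotProduct_le_lawG hsym hid hne heig hw hmax d t
  refine ENNReal.ofReal_le_of_le_toReal (le_of_mul_le_mul_right ?_ hM_pos)
  calc (β ^ t - 2 * d * √(Fintype.card Γ)) * M
      = β ^ t * M - d * (2 * √(Fintype.card Γ) * M) := by ring
    _ ≤ d + (M - d) * p - d * 1 := sub_le_sub hmean (mul_le_mul_of_nonneg_left hM hd)
    _ = p * M - d * p := by ring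
    _ ≤ p * M := sub_le_self _ (mul_nonneg hd measureReal_nonneg)

end GibbsSampler

/-- Lower-bound mechanism: starting the Gibbs sampler on the simplex from the maximizer `w`
of `⟨·, v⟩`, where `v` is a unit eigenvector of `K` for `β₂ = 1 - γ`,
`P[⟨X_t, v⟩ > d] ≥ (1 - γ)^t - 2 d √n`. -/
theorem gibbs_sampler_cayley_eigenvector_lower_bound
    (R : Finset G) (hsym : ∀ r ∈ R, r⁻¹ ∈ R) (hid : (1 : G) ∉ R) (hne : R.Nonempty)
    (hgen : Subgroup.closure (R : Set G) = ⊤)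
    (v : G → ℝ)
    (heig : ∀ g, ∑ h, Kmat G R g h * v h = beta2 G R * v g)
    (hnorm : ∑ g, (v g) ^ 2 = 1)
    (hsign : 1 / 2 ≤ ∑ g ∈ Finset.univ.filter fun g => 0 ≤ v g, (v g) ^ 2)
    (w : G → ℝ) (hw : w ∈ simplexG G)
    (hmax : ∀ w' ∈ simplexG G, ∑ g, w' g * v g ≤ ∑ g, w g * v g)
    (d : ℝ) (hd : 0 < d) (t : ℕ) :
    ENNReal.ofReal ((1 - (1 - beta2 G R)) ^ t -
        2 * d * Real.sqrt (Fintype.card G)) ≤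
      lawG G R w t {x | d < ∑ g, x g * v g} := by
  rw [sub_sub_cancel]
  exact gibbs_sampler_cayley_eigenvector_lower_bound_general hsym hid hne (funext heig)
    (by linarith) hw hmax hd.le t

end
end
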